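/- arXiv:2301.04287 — 2 statements merged into one kernel-verified Lean document; each statement's English description precedes it below -/
import Mathlib

section
/- The (n+2)-dimensional Lebesgue measure of Δ equals (2n+2)/(n+2)!. -/
/-- The points `V_1, …, V_{n+3}` in `ℝ^{n+2}` (0-indexed: `Vpt n j` is `V_{j+1}`):
`V_i = e_i + e_{n+1} + e_{n+2}` for `1 ≤ i ≤ n`,
`V_{n+1} = −(e_1+⋯+e_n) + e_{n+1} + e_{n+2}`, `V_{n+2} = e_{n+1}`, `V_{n+3} = e_{n+2}`. -/
def Vpt (n : ℕ) (j : Fin (n + 3)) (i : Fin (n + 2)) : ℝ :=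
  if (j : ℕ) < n then
    (if (i : ℕ) = (j : ℕ) then 1 else 0) + (if (i : ℕ) = n then 1 else 0) +
      (if (i : ℕ) = n + 1 then 1 else 0)
  else if (j : ℕ) = n then (if (i : ℕ) < n then -1 else 1)
  else if (j : ℕ) = n + 1 then (if (i : ℕ) = n then 1 else 0)
  else (if (i : ℕ) = n + 1 then 1 else 0)

/-!
Let `F` consist of `0, V_1, …, V_{n+1}`. All of `F` lies in the hyperplane `x_{n+1} = x_{n+2}`,
which separates `p = V_{n+2}` from `q = V_{n+3}`. Since `V_1 + ⋯ + V_{n+1} = (n + 1) (p + q)`, the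
midpoint of `p` and `q` lies in the convex hull of `F`, so that this hyperplane cuts `Δ` into the
simplices with vertices `F ∪ {p}` and `F ∪ {q}`. The determinant of `V_1, …, V_{n+1}, x` is
`(n + 1) (x_{n+2} - x_{n+1})`, so each of the two simplices has volume `(n + 1) / (n + 2)!`.
-/

open MeasureTheory

section ConvexHull

variable {𝕜 E : Type*} [Field 𝕜] [LinearOrder 𝕜] [IsStrictOrderedRing 𝕜] [AddCommGroup E]
  [Module 𝕜 E] {s : Set E} {p q m : E}

lemma segment_subset_segment_union_segment (hm : m ∈ segment 𝕜 p q) :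
    segment 𝕜 p q ⊆ segment 𝕜 p m ∪ segment 𝕜 m q := by
  have hline : m ∈ Set.range (AffineMap.lineMap p q : 𝕜 → E) := by
    rw [segment_eq_image_lineMap] at hm
    exact Set.image_subset_range _ _ hm
  rw [← insert_endpoints_openSegment]
  rintro x (rfl | rfl | hx)
  · exact .inl (left_mem_segment 𝕜 x m)
  · exact .inr (right_mem_segment 𝕜 m x)
  · rcases openSegment_subset_union p q hline hx with rfl | hx | hx
    · exact .inl (right_mem_segment 𝕜 p x)
    · exact .inl (openSegment_subset_segment 𝕜 p m hx)
    · exact .inr (openSegment_subset_segment 𝕜 m q hx)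

lemma convexHull_insert_insert_eq_union (hm : m ∈ segment 𝕜 p q) (hms : m ∈ convexHull 𝕜 s) :
    convexHull 𝕜 (insert p (insert q s)) =
      convexHull 𝕜 (insert p s) ∪ convexHull 𝕜 (insert q s) := by
  have hs : s.Nonempty := convexHull_nonempty_iff.1 ⟨m, hms⟩
  have join_subset (x : E) :
      convexJoin 𝕜 (segment 𝕜 x m) (convexHull 𝕜 s) ⊆ convexHull 𝕜 (insert x s) := by
    have hsub : convexHull 𝕜 s ⊆ convexHull 𝕜 (insert x s) :=
      convexHull_mono (Set.subset_insert x s)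
    exact convexJoin_subset ((convex_convexHull 𝕜 _).segment_subset
      (subset_convexHull 𝕜 _ (Set.mem_insert x s)) (hsub hms)) hsub (convex_convexHull 𝕜 _)
  apply Set.Subset.antisymm
  · calc convexHull 𝕜 (insert p (insert q s))
        = convexJoin 𝕜 (segment 𝕜 p q) (convexHull 𝕜 s) := by
          rw [← convexHull_pair, ← convexHull_union (Set.insert_nonempty p {q}) hs,
            Set.insert_union, Set.singleton_union]
      _ ⊆ convexJoin 𝕜 (segment 𝕜 p m ∪ segment 𝕜 m q) (convexHull 𝕜 s) :=
          convexJoin_mono_left (segment_subset_segment_union_segment hm)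
      _ ⊆ convexHull 𝕜 (insert p s) ∪ convexHull 𝕜 (insert q s) := by
          rw [convexJoin_union_left, segment_symm 𝕜 m q]
          exact Set.union_subset_union (join_subset p) (join_subset q)
  · exact Set.union_subset (convexHull_mono (Set.insert_subset_insert (Set.subset_insert q s)))
      (convexHull_mono (Set.subset_insert p _))

end ConvexHull

lemma aedisjoint_convexHull_of_separated {E : Type*} [NormedAddCommGroup E] [NormedSpace ℝ E]
    [FiniteDimensional ℝ E] [MeasurableSpace E] [BorelSpace E] (μ : Measure E)
    [μ.IsAddHaarMeasure] {s t : Set E} {f : E →ₗ[ℝ] ℝ} (hf : f ≠ 0)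
    (hs : ∀ x ∈ s, f x ≤ 0) (ht : ∀ x ∈ t, 0 ≤ f x) :
    AEDisjoint μ (convexHull ℝ s) (convexHull ℝ t) := by
  have hker : μ (LinearMap.ker f) = 0 :=
    Measure.addHaar_submodule μ _ (mt LinearMap.ker_eq_top.1 hf)
  refine measure_mono_null (fun x hx ↦ ?_) hker
  have hle : f x ≤ 0 := convexHull_min hs (convex_halfSpace_le f.isLinear 0) hx.1
  have hge : 0 ≤ f x := convexHull_min ht (convex_halfSpace_ge f.isLinear 0) hx.2
  exact le_antisymm hle hge

section CornerSimplex

/-- The corner of the nonnegative orthant of `ℝ^ι` cut off by the hyperplane `∑ i, x i = t`; for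
`t = 1` it is the convex hull of the origin and the standard basis. -/
def cornerSimplex (ι : Type*) [Fintype ι] (t : ℝ) : Set (ι → ℝ) :=
  {x | (∀ i, 0 ≤ x i) ∧ ∑ i, x i ≤ t}

variable {ι : Type*} [Fintype ι]

lemma isClosed_cornerSimplex (t : ℝ) : IsClosed (cornerSimplex ι t) := by
  simp only [cornerSimplex, Set.ofPred_and, Set.ofPred_forall]
  exact (isClosed_iInter fun i ↦ isClosed_le (by fun_prop) (by fun_prop)).inter
    (isClosed_le (by fun_prop) (by fun_prop))

lemma convex_cornerSimplex (t : ℝ) : Convex ℝ (cornerSimplex ι t) := by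
  simp only [cornerSimplex, Set.ofPred_and, Set.ofPred_forall]
  refine (convex_iInter fun i ↦ convex_halfSpace_ge (LinearMap.proj i).isLinear 0).inter ?_
  simpa using convex_halfSpace_le (∑ i : ι, LinearMap.proj (R := ℝ) (φ := fun _ ↦ ℝ) i).isLinear t

lemma cornerSimplex_one_eq_convexHull [DecidableEq ι] :
    cornerSimplex ι 1 =
      convexHull ℝ (insert 0 (Set.range fun i : ι ↦ (Pi.single i 1 : ι → ℝ))) := by
  apply Set.Subset.antisymm
  · rintro x ⟨hx0, hx1⟩
    refine mem_convexHull_of_exists_fintype (fun o : Option ι ↦ o.elim (1 - ∑ i, x i) x)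
      (fun o ↦ o.elim 0 fun i ↦ Pi.single i 1) ?_ ?_ ?_ ?_
    · rintro (_ | i)
      · exact sub_nonneg.2 hx1
      · exact hx0 i
    · simp [Fintype.sum_option]
    · rintro (_ | i)
      · exact Set.mem_insert _ _
      · exact Set.mem_insert_of_mem _ ⟨i, rfl⟩
    · simpa [Fintype.sum_option] using (pi_eq_sum_univ' x).symm
  · refine convexHull_min ?_ (convex_cornerSimplex 1)
    rintro _ (rfl | ⟨i, rfl⟩)
    · simp [cornerSimplex]
    · exact ⟨fun j ↦ (Pi.single_nonneg (i := i).2 zero_le_one : (0 : ι → ℝ) ≤ _) j, by simp⟩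

lemma cornerSimplex_eq_empty {t : ℝ} (ht : t < 0) : cornerSimplex ι t = ∅ :=
  Set.eq_empty_of_forall_notMem fun _ hx ↦
    (hx.2.trans_lt ht).not_ge (Finset.sum_nonneg fun i _ ↦ hx.1 i)

lemma cons_mem_cornerSimplex {N : ℕ} {t x : ℝ} {y : Fin N → ℝ} :
    (Fin.cons x y : Fin (N + 1) → ℝ) ∈ cornerSimplex (Fin (N + 1)) t ↔
      0 ≤ x ∧ y ∈ cornerSimplex (Fin N) (t - x) := by
  simp [cornerSimplex, Fin.forall_fin_succ, Fin.sum_univ_succ, le_sub_iff_add_le', and_assoc]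

lemma volume_cornerSimplex_fin_succ (N : ℕ) (t : ℝ) :
    volume (cornerSimplex (Fin (N + 1)) t) =
      ∫⁻ x in Set.Icc 0 t, volume (cornerSimplex (Fin N) (t - x)) := by
  let e := (MeasurableEquiv.piFinSuccAbove (fun _ : Fin (N + 1) ↦ ℝ) 0).symm
  have he : MeasurePreserving e := (volume_preserving_piFinSuccAbove _ 0).symm
  have hsection (x : ℝ) : Prod.mk x ⁻¹' (e ⁻¹' cornerSimplex (Fin (N + 1)) t) =
      {y | 0 ≤ x ∧ y ∈ cornerSimplex (Fin N) (t - x)} := by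
    ext y
    simpa [e] using! cons_mem_cornerSimplex (x := x) (y := y)
  rw [← he.measure_preimage_equiv, Measure.volume_eq_prod,
    Measure.prod_apply (e.measurable (isClosed_cornerSimplex t).measurableSet),
    ← lintegral_indicator measurableSet_Icc]
  refine lintegral_congr fun x ↦ ?_
  rw [hsection]
  by_cases hx0 : 0 ≤ x <;> by_cases hxt : x ≤ t
  · simp [hx0, hxt]
  · simp [hxt, cornerSimplex_eq_empty (ι := Fin N) (sub_neg.2 (not_le.1 hxt))]
  · simp [hx0]
  · simp [hx0]

lemma lintegral_Icc_ofReal_sub_pow (N : ℕ) {t : ℝ} (ht : 0 ≤ t) :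
    ∫⁻ x in Set.Icc 0 t, ENNReal.ofReal ((t - x) ^ N) = ENNReal.ofReal (t ^ (N + 1) / (N + 1)) := by
  have hnonneg : ∀ᵐ x ∂volume.restrict (Set.Icc 0 t), 0 ≤ (t - x) ^ N := by
    filter_upwards [ae_restrict_mem measurableSet_Icc] with x hx
    exact pow_nonneg (sub_nonneg.2 hx.2) N
  rw [← ofReal_integral_eq_lintegral_ofReal
      (Continuous.integrableOn_Icc (by fun_prop)) hnonneg,
    integral_Icc_eq_integral_Ioc, ← intervalIntegral.integral_of_le ht,
    intervalIntegral.integral_comp_sub_left (fun x ↦ x ^ N) t, integral_pow]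
  simp

lemma volume_cornerSimplex_fin (N : ℕ) {t : ℝ} (ht : 0 ≤ t) :
    volume (cornerSimplex (Fin N) t) = ENNReal.ofReal (t ^ N / N.factorial) := by
  induction N generalizing t with
  | zero => simp [cornerSimplex, ht, volume_pi]
  | succ N ih =>
    have hslice : ∀ x ∈ Set.Icc 0 t, volume (cornerSimplex (Fin N) (t - x)) =
        ENNReal.ofReal (N.factorial : ℝ)⁻¹ * ENNReal.ofReal ((t - x) ^ N) := fun x hx ↦ by
      rw [ih (sub_nonneg.2 hx.2), ← ENNReal.ofReal_mul (by positivity), inv_mul_eq_div]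
    rw [volume_cornerSimplex_fin_succ, setLIntegral_congr_fun measurableSet_Icc hslice,
      lintegral_const_mul _ (by fun_prop), lintegral_Icc_ofReal_sub_pow N ht,
      ← ENNReal.ofReal_mul (by positivity), Nat.factorial_succ]
    congr 1
    push_cast
    field_simp

lemma volume_cornerSimplex {t : ℝ} (ht : 0 ≤ t) :
    volume (cornerSimplex ι t) =
      ENNReal.ofReal (t ^ Fintype.card ι / (Fintype.card ι).factorial) := by
  let e := (Fintype.equivFin ι).symm
  have he := volume_measurePreserving_piCongrLeft (fun _ : ι ↦ ℝ) e
  have hpre : MeasurableEquiv.piCongrLeft (fun _ : ι ↦ ℝ) e ⁻¹' cornerSimplex ι t =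
      cornerSimplex (Fin (Fintype.card ι)) t := by
    ext x
    simp [cornerSimplex, MeasurableEquiv.coe_piCongrLeft, ← e.forall_congr_right, ← e.sum_comp,
      Equiv.piCongrLeft_apply_apply]
  rw [← he.measure_preimage_equiv, hpre, volume_cornerSimplex_fin _ ht]

theorem volume_convexHull_insert_zero_range [DecidableEq ι] (v : ι → ι → ℝ) :
    volume (convexHull ℝ (insert 0 (Set.range v))) =
      ENNReal.ofReal (|(Matrix.of v).det| / (Fintype.card ι).factorial) := by
  have himage : convexHull ℝ (insert 0 (Set.range v)) =
      (Matrix.of v).transpose.toLin' '' cornerSimplex ι 1 := by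
    rw [cornerSimplex_one_eq_convexHull, LinearMap.image_convexHull, Set.image_insert_eq, map_zero,
      ← Set.range_comp]
    congr! 3
    ext i j
    simp
  rw [himage, Measure.addHaar_image_linearMap, volume_cornerSimplex zero_le_one,
    LinearMap.det_toLin', Matrix.det_transpose, ← ENNReal.ofReal_mul (abs_nonneg _), one_pow,
    mul_one_div]

end CornerSimplex

/-- The vertices `V_1, …, V_{n+1}`, which together with the origin span the common facet of the two
simplices that `Δ` is cut into. -/
def facetVertex (n : ℕ) (i : Fin (n + 1)) : Fin (n + 2) → ℝ := Vpt n i.castSucc.castSucc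

/-- The vertices `V_{n+2} = e_{n+1}` (for `k = 0`) and `V_{n+3} = e_{n+2}` (for `k = 1`), which are
the apexes of the two simplices over their common facet. -/
def apex (n : ℕ) (k : Fin 2) : Fin (n + 2) → ℝ := Pi.single (Fin.natAdd n k) 1

/-- The linear form `x_{n+2} - x_{n+1}` on `ℝ^{n+2}`, whose kernel contains the common facet of the
two simplices. -/
def facetForm (n : ℕ) : (Fin (n + 2) → ℝ) →ₗ[ℝ] ℝ :=
  (LinearMap.proj (Fin.natAdd n (1 : Fin 2)) : (Fin (n + 2) → ℝ) →ₗ[ℝ] ℝ) -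
    LinearMap.proj (Fin.natAdd n (0 : Fin 2))

/-- The convex hull of `x` and the facet `0, V_1, …, V_{n+1}`. -/
def simplexOverFacet (n : ℕ) (x : Fin (n + 2) → ℝ) : Set (Fin (n + 2) → ℝ) :=
  convexHull ℝ (insert x (insert 0 (Set.range (facetVertex n))))

lemma range_Vpt (n : ℕ) :
    Set.range (Vpt n) = insert (apex n 0) (insert (apex n 1) (Set.range (facetVertex n))) := by
  have h0 : Vpt n (Fin.last (n + 1)).castSucc = apex n 0 := by
    ext i
    simp [Vpt, apex, Pi.single_apply, Fin.ext_iff]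
  have h1 : Vpt n (Fin.last (n + 2)) = apex n 1 := by
    ext i
    simp [Vpt, apex, Pi.single_apply, Fin.ext_iff]
  have hsnoc : Vpt n = (Fin.snoc (Fin.snoc (facetVertex n) (apex n 0) : Fin (n + 2) → _)
      (apex n 1) : Fin (n + 3) → Fin (n + 2) → ℝ) := by
    rw [← h0, ← h1]
    ext i : 1
    induction i using Fin.lastCases with
    | last => simp
    | cast i => induction i using Fin.lastCases <;> simp [facetVertex]
  rw [hsnoc, Fin.range_snoc, Fin.range_snoc, Set.insert_comm]

lemma facetVertex_castSucc_castAdd {n : ℕ} (i j : Fin n) :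
    facetVertex n i.castSucc (Fin.castAdd 2 j) = (1 : Matrix (Fin n) (Fin n) ℝ) i j := by
  have hj1 : (j : ℕ) ≠ n + 1 := by lia
  simp [facetVertex, Vpt, Matrix.one_apply, Fin.ext_iff, j.2.ne, hj1, eq_comm]

lemma facetVertex_last_castAdd {n : ℕ} (j : Fin n) :
    facetVertex n (Fin.last n) (Fin.castAdd 2 j) = -1 := by
  simp [facetVertex, Vpt]

lemma facetVertex_natAdd {n : ℕ} (i : Fin (n + 1)) (k : Fin 2) :
    facetVertex n i (Fin.natAdd n k) = 1 := by
  induction i using Fin.lastCases with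
  | last => fin_cases k <;> simp [facetVertex, Vpt]
  | cast i => fin_cases k <;> simp [facetVertex, Vpt, i.2.ne', (i.2.trans n.lt_succ_self).ne']

lemma facetForm_facetVertex (n : ℕ) (i : Fin (n + 1)) : facetForm n (facetVertex n i) = 0 := by
  simp [facetForm, facetVertex_natAdd]

lemma facetForm_apex_zero (n : ℕ) : facetForm n (apex n 0) = -1 := by
  simp [facetForm, apex]

lemma facetForm_apex_one (n : ℕ) : facetForm n (apex n 1) = 1 := by
  simp [facetForm, apex]

lemma sum_facetVertex (n : ℕ) :
    ∑ i, facetVertex n i = (n + 1 : ℝ) • (apex n 0 + apex n 1) := by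
  ext c
  induction c using Fin.addCases with
  | left j =>
    have hapex (k : Fin 2) : apex n k (Fin.castAdd 2 j) = 0 :=
      Pi.single_eq_of_ne (Fin.ne_of_val_ne (by simp; lia)) 1
    simp [Fin.sum_univ_castSucc, facetVertex_castSucc_castAdd, facetVertex_last_castAdd,
      Matrix.one_apply, hapex]
  | right k =>
    fin_cases k <;> simp [facetVertex_natAdd, apex]

lemma midpoint_apex_mem_convexHull (n : ℕ) :
    midpoint ℝ (apex n 0) (apex n 1) ∈ convexHull ℝ (insert 0 (Set.range (facetVertex n))) := by
  have hsum : apex n 0 + apex n 1 ∈ convexHull ℝ (insert 0 (Set.range (facetVertex n))) := by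
    refine mem_convexHull_of_exists_fintype (fun _ ↦ (n + 1 : ℝ)⁻¹) (facetVertex n)
      (fun _ ↦ by positivity) ?_ (fun i ↦ .inr ⟨i, rfl⟩) ?_
    · simp [field]
    · rw [← Finset.smul_sum, sum_facetVertex, inv_smul_smul₀ (by positivity)]
  rw [midpoint_eq_smul_add]
  exact (convex_convexHull ℝ _).smul_mem_of_zero_mem (subset_convexHull ℝ _ (.inl rfl)) hsum
    ⟨by norm_num, by norm_num⟩

lemma convexHull_Vpt_eq_union (n : ℕ) :
    convexHull ℝ (insert 0 (Set.range (Vpt n))) =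
      simplexOverFacet n (apex n 0) ∪ simplexOverFacet n (apex n 1) := by
  rw [range_Vpt, Set.insert_comm, Set.insert_comm 0]
  exact convexHull_insert_insert_eq_union (midpoint_mem_segment _ _)
    (midpoint_apex_mem_convexHull n)

lemma aedisjoint_simplexOverFacet_apex (n : ℕ) :
    AEDisjoint volume (simplexOverFacet n (apex n 0)) (simplexOverFacet n (apex n 1)) := by
  have hf : facetForm n ≠ 0 := fun h ↦ by simpa [h] using facetForm_apex_one n
  refine aedisjoint_convexHull_of_separated volume hf ?_ ?_ <;>
    rintro _ (rfl | rfl | ⟨i, rfl⟩) <;>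
    simp [facetForm_facetVertex, facetForm_apex_zero, facetForm_apex_one]

lemma submatrix_snoc_facetVertex (n : ℕ) (x : Fin (n + 2) → ℝ) :
    (Matrix.of (Fin.snoc (facetVertex n) x : Fin (n + 2) → _)).submatrix
        (finSumFinEquiv (m := n) (n := 2)) (finSumFinEquiv (m := n) (n := 2)) =
      Matrix.fromBlocks 1 (Matrix.of fun _ _ ↦ 1)
        (Matrix.of ![fun _ ↦ -1, fun j ↦ x (Fin.castAdd 2 j)])
        (Matrix.of ![fun _ ↦ 1, fun k ↦ x (Fin.natAdd n k)]) := by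
  have hrow (i : Fin n) : (Fin.snoc (facetVertex n) x : Fin (n + 2) → _) (Fin.castAdd 2 i) =
      facetVertex n i.castSucc := Fin.snoc_castSucc (α := fun _ ↦ _) _ _ i.castSucc
  have hrow0 : (Fin.snoc (facetVertex n) x : Fin (n + 2) → _) (Fin.natAdd n (0 : Fin 2)) =
      facetVertex n (Fin.last n) := Fin.snoc_castSucc (α := fun _ ↦ _) _ _ (Fin.last n)
  have hrow1 : (Fin.snoc (facetVertex n) x : Fin (n + 2) → _) (Fin.natAdd n (1 : Fin 2)) = x :=
    Fin.snoc_last (α := fun _ ↦ _) _ _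
  ext (i | i) (j | j)
  · simp [hrow, facetVertex_castSucc_castAdd]
  · simp [hrow, facetVertex_natAdd]
  · fin_cases i <;> simp [hrow0, hrow1, facetVertex_last_castAdd]
  · fin_cases i <;> simp [hrow0, hrow1, facetVertex_natAdd]

lemma det_snoc_facetVertex (n : ℕ) (x : Fin (n + 2) → ℝ) :
    (Matrix.of (Fin.snoc (facetVertex n) x : Fin (n + 2) → _)).det = (n + 1) * facetForm n x := by
  rw [← Matrix.det_submatrix_equiv_self (finSumFinEquiv (m := n) (n := 2)),
    submatrix_snoc_facetVertex, Matrix.det_fromBlocks_one₁₁, Matrix.det_fin_two]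
  simp only [Matrix.sub_apply, Matrix.mul_apply, Matrix.of_apply, Matrix.cons_val',
    Matrix.cons_val_fin_one, Matrix.cons_val_zero, Matrix.cons_val_one, mul_one,
    Finset.sum_neg_distrib, Finset.sum_const, Finset.card_univ, Fintype.card_fin, nsmul_eq_mul,
    facetForm, LinearMap.sub_apply, LinearMap.coe_proj, Function.eval]
  ring

lemma nullMeasurableSet_simplexOverFacet (n : ℕ) (x : Fin (n + 2) → ℝ) :
    NullMeasurableSet (simplexOverFacet n x) :=
  ((((Set.finite_range _).insert 0).insert x).isClosed_convexHull ℝ).nullMeasurableSet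

lemma volume_simplexOverFacet (n : ℕ) (x : Fin (n + 2) → ℝ) :
    volume (simplexOverFacet n x) =
      ENNReal.ofReal ((n + 1) * |facetForm n x| / (n + 2).factorial) := by
  rw [simplexOverFacet, Set.insert_comm, ← Fin.range_snoc, volume_convexHull_insert_zero_range,
    det_snoc_facetVertex, abs_mul, abs_of_nonneg (by positivity), Fintype.card_fin]

theorem stmt15 (n : ℕ) (hn : 1 ≤ n) :
    MeasureTheory.volume
        (convexHull ℝ (insert (0 : Fin (n + 2) → ℝ) (Set.range (Vpt n))))
      = ENNReal.ofReal ((2 * n + 2 : ℝ) / (n + 2).factorial) := by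
  rw [convexHull_Vpt_eq_union,
    measure_union₀ (nullMeasurableSet_simplexOverFacet n _) (aedisjoint_simplexOverFacet_apex n),
    volume_simplexOverFacet, volume_simplexOverFacet, facetForm_apex_zero, facetForm_apex_one,
    ← ENNReal.ofReal_add (by positivity) (by positivity)]
  congr 1
  simp only [abs_neg, abs_one]
  ring
end

section
/- For every integer k ≥ 0, the number of lattice points of ℤ^{n+2} lying in the dilate k·Δ equals C(k+n+2, n+2) + 2·Σ_{j=1}^{n} C(k−j+n+2, n+2) + C(k+1, n+2), where C(m, r) denotes the binomial coefficient and terms with k < j are understood to vanish. (Equivalently, the Hodge numbers of Δ are H_Δ(0) = 1, H_Δ(1) = ⋯ = H_Δ(n) = 2, H_Δ(n+1) = 1.) -/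
open Finset
open scoped Pointwise

/-!
The vectors `e_1, …, e_n, -(e_1 + ⋯ + e_n)` are the images of the standard basis of `ℝⁿ⁺¹` in its
quotient by the diagonal. Hence a point `(y, a, b)` with `y ∈ ℝⁿ` lies in `c·Δ` exactly when `y` has
a representative `l ≥ 0` in `ℝⁿ⁺¹` with `∑ l ≤ min a b` and `max a b ≤ c`: given such an `l`, add a
constant to raise its sum to `min a b`, and use `a + b - min a b = max a b`. A lattice point has a
unique representative in `ℕⁿ⁺¹` with a zero entry, and this one has the smallest sum. The number of
those with sum at most `r` is `C(r+n+1, n+1) - C(r, n+1) = ∑_{i ≤ n} C(r+i, n)`. Summing over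
`0 ≤ a, b ≤ k` with `r = min a b` turns the `i`-th term into `C(k+1+i, n+2) + C(k+2+i, n+2)`, and
adding up neighbouring terms yields the coefficients `1, 2, …, 2, 1`.
-/

section Combinatorics

theorem choose_succ_add_sum_range_choose (r d m : ℕ) :
    r.choose (d + 1) + ∑ i ∈ range m, (r + i).choose d = (r + m).choose (d + 1) := by
  induction m with
  | zero => simp
  | succ m ih => rw [sum_range_succ, ← add_assoc, ih, ← add_assoc, Nat.choose_succ_succ', add_comm]

theorem sum_range_choose_add {i d : ℕ} (h : i ≤ d) (m : ℕ) :
    ∑ a ∈ range m, (a + i).choose d = (m + i).choose (d + 1) := by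
  have := choose_succ_add_sum_range_choose i d m
  simpa [Nat.choose_eq_zero_of_lt (Nat.lt_succ_of_le h), add_comm i] using this

theorem sum_sum_range_min {M : Type*} [AddCommMonoid M] (f : ℕ → M) (k : ℕ) :
    ∑ a ∈ range k, ∑ b ∈ range k, f (min a b)
      = ∑ m ∈ range k, (∑ a ∈ range m, f a + ∑ a ∈ range (m + 1), f a) := by
  induction k with
  | zero => simp
  | succ k ih =>
    have old_rows : ∑ a ∈ range k, ∑ b ∈ range (k + 1), f (min a b)
        = ∑ a ∈ range k, ∑ b ∈ range k, f (min a b) + ∑ a ∈ range k, f a := by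
      rw [← sum_add_distrib]
      refine sum_congr rfl fun a ha => ?_
      rw [sum_range_succ, min_eq_left (mem_range.1 ha).le]
    have new_row : ∑ b ∈ range (k + 1), f (min k b) = ∑ b ∈ range (k + 1), f b :=
      sum_congr rfl fun b hb => by rw [min_eq_right (mem_range_succ_iff.1 hb)]
    rw [sum_range_succ, old_rows, new_row, ih, add_assoc, ← sum_range_succ]

theorem sum_sum_range_choose_min_add {i d : ℕ} (h : i ≤ d) (k : ℕ) :
    ∑ a ∈ range k, ∑ b ∈ range k, (min a b + i).choose d
      = (k + i).choose (d + 2) + (k + (i + 1)).choose (d + 2) := by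
  rw [sum_sum_range_min fun m => (m + i).choose d]
  simp only [sum_range_choose_add h, sum_add_distrib, add_right_comm _ 1 i, add_assoc _ i 1]
  rw [sum_range_choose_add (by lia), sum_range_choose_add (by lia)]

theorem sum_range_add_succ {R : Type*} [CommSemiring R] (g : ℕ → R) (n : ℕ) :
    ∑ i ∈ range (n + 1), (g i + g (i + 1))
      = g (n + 1) + 2 * ∑ i ∈ range n, g (i + 1) + g 0 := by
  rw [sum_add_distrib, sum_range_succ', sum_range_succ (fun i => g (i + 1))]
  ring

theorem sum_Icc_ite_choose_sub (n k : ℕ) :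
    ∑ j ∈ Icc 1 n, (if j ≤ k then (k - j + n + 2).choose (n + 2) else 0)
      = ∑ i ∈ range n, (k + 1 + (i + 1)).choose (n + 2) := by
  refine sum_nbij' (n - ·) (n - ·) ?_ ?_ ?_ ?_ fun j hj => ?_
  any_goals intro j hj; simp only [mem_Icc, mem_range] at hj ⊢; lia
  rw [mem_Icc] at hj
  split_ifs with hjk
  · congr 1; lia
  · exact (Nat.choose_eq_zero_of_lt (by lia)).symm

variable (ι : Type*) [Fintype ι] [DecidableEq ι]

/-- The lattice points of the `r`-th dilate of the standard simplex in `ι → ℝ`: the tuples of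
naturals with sum at most `r`. -/
def tuplesSumLE (r : ℕ) : Finset (ι → ℕ) :=
  (range (r + 1)).biUnion (piAntidiag univ)

/-- The tuples of `tuplesSumLE ι r` with a zero entry. They represent each class of `ι → ℕ` modulo
constant tuples by its smallest element. -/
def reducedTuplesSumLE (r : ℕ) : Finset (ι → ℕ) :=
  {l ∈ tuplesSumLE ι r | ∃ i, l i = 0}

variable {ι} in
theorem mem_tuplesSumLE {r : ℕ} {l : ι → ℕ} : l ∈ tuplesSumLE ι r ↔ ∑ i, l i ≤ r := by
  simp [tuplesSumLE]

variable {ι} in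
theorem mem_reducedTuplesSumLE {r : ℕ} {l : ι → ℕ} :
    l ∈ reducedTuplesSumLE ι r ↔ ∑ i, l i ≤ r ∧ ∃ i, l i = 0 := by
  simp [reducedTuplesSumLE, mem_tuplesSumLE]

theorem card_piAntidiag_univ (t : ℕ) :
    #(piAntidiag (univ : Finset ι) t) = (Fintype.card ι).multichoose t := by
  rw [← map_sym_eq_piAntidiag, card_map, sym_univ, card_univ, Sym.card_sym_eq_multichoose]

theorem card_tuplesSumLE (r : ℕ) :
    #(tuplesSumLE ι r) = (r + Fintype.card ι).choose (Fintype.card ι) := by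
  rw [tuplesSumLE, card_biUnion]
  · simp only [card_piAntidiag_univ, Nat.sum_range_multichoose]
  · intro s _ t _ hst
    exact disjoint_left.2 fun l hs ht =>
      hst ((mem_piAntidiag.1 hs).1.symm.trans (mem_piAntidiag.1 ht).1)

theorem filter_ne_zero_tuplesSumLE_add_card (r : ℕ) :
    {l ∈ tuplesSumLE ι (r + Fintype.card ι) | ∀ i, l i ≠ 0}
      = (tuplesSumLE ι r).map (addRightEmbedding 1) := by
  have sum_add_one (l : ι → ℕ) : ∑ i, (l + 1) i = ∑ i, l i + Fintype.card ι := by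
    simp [sum_add_distrib]
  ext l
  simp only [mem_filter, mem_map, mem_tuplesSumLE, addRightEmbedding_apply]
  constructor
  · rintro ⟨hl, hpos⟩
    have sub_add : l - 1 + 1 = l :=
      funext fun i => Nat.sub_add_cancel (Nat.one_le_iff_ne_zero.2 (hpos i))
    rw [← sub_add, sum_add_one] at hl
    exact ⟨l - 1, Nat.le_of_add_le_add_right hl, sub_add⟩
  · rintro ⟨m, hm, rfl⟩
    exact ⟨(sum_add_one m).trans_le (by lia), fun i => Nat.succ_ne_zero _⟩

theorem card_filter_ne_zero_tuplesSumLE (r : ℕ) :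
    #{l ∈ tuplesSumLE ι r | ∀ i, l i ≠ 0} = r.choose (Fintype.card ι) := by
  obtain hr | ⟨s, rfl⟩ := (lt_or_ge r (Fintype.card ι)).imp_right Nat.exists_eq_add_of_le'
  · rw [Nat.choose_eq_zero_of_lt hr, card_eq_zero, filter_eq_empty_iff]
    intro l hl hpos
    have card_le : Fintype.card ι ≤ ∑ i, l i := by
      simpa using card_nsmul_le_sum univ l 1 fun i _ => Nat.one_le_iff_ne_zero.2 (hpos i)
    exact hr.not_ge (card_le.trans (mem_tuplesSumLE.1 hl))
  · rw [filter_ne_zero_tuplesSumLE_add_card, card_map, card_tuplesSumLE]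

theorem card_reducedTuplesSumLE {d : ℕ} (hd : Fintype.card ι = d + 1) (r : ℕ) :
    #(reducedTuplesSumLE ι r) = ∑ i ∈ range (d + 1), (r + i).choose d := by
  have split := card_filter_add_card_filter_not (s := tuplesSumLE ι r) (fun l => ∃ i, l i = 0)
  push Not at split
  rw [card_filter_ne_zero_tuplesSumLE, card_tuplesSumLE, hd,
    ← choose_succ_add_sum_range_choose, add_comm] at split
  exact Nat.add_left_cancel split

theorem sum_sum_card_reducedTuplesSumLE_min (n k : ℕ) :
    ∑ a ∈ range (k + 1), ∑ b ∈ range (k + 1), #(reducedTuplesSumLE (Fin (n + 1)) (min a b))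
      = (k + n + 2).choose (n + 2)
        + 2 * (∑ j ∈ Icc 1 n, if j ≤ k then (k - j + n + 2).choose (n + 2) else 0)
        + (k + 1).choose (n + 2) := by
  calc
    _ = ∑ i ∈ range (n + 1), ∑ a ∈ range (k + 1), ∑ b ∈ range (k + 1),
          (min a b + i).choose n := by
      simp only [card_reducedTuplesSumLE _ (Fintype.card_fin (n + 1))]
      exact (sum_congr rfl fun a _ => sum_comm).trans sum_comm
    _ = ∑ i ∈ range (n + 1), ((k + 1 + i).choose (n + 2) + (k + 1 + (i + 1)).choose (n + 2)) :=
      sum_congr rfl fun i hi => sum_sum_range_choose_min_add (mem_range_succ_iff.1 hi) (k + 1)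
    _ = (k + 1 + (n + 1)).choose (n + 2) + 2 * ∑ i ∈ range n, (k + 1 + (i + 1)).choose (n + 2)
          + (k + 1).choose (n + 2) :=
      sum_range_add_succ (fun i => (k + 1 + i).choose (n + 2)) n
    _ = _ := by rw [sum_Icc_ite_choose_sub, show k + 1 + (n + 1) = k + n + 2 by ring]

end Combinatorics

section ConvexHull

variable {𝕜 E ι : Type*} [Field 𝕜] [LinearOrder 𝕜] [IsStrictOrderedRing 𝕜]
  [AddCommGroup E] [Module 𝕜 E] [Fintype ι]

theorem convexHull_range_eq_image_stdSimplex (v : ι → E) :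
    convexHull 𝕜 (Set.range v) = Fintype.linearCombination 𝕜 v '' stdSimplex 𝕜 ι := by
  classical
  rw [← convexHull_rangle_single_eq_stdSimplex, LinearMap.image_convexHull, ← Set.range_comp]
  congr! 2 with i
  ext i
  simp

theorem mem_smul_convexHull_insert_zero_range {c : 𝕜} (hc : 0 ≤ c) (v : ι → E) {x : E} :
    x ∈ c • convexHull 𝕜 (insert 0 (Set.range v)) ↔
      ∃ w : ι → 𝕜, (∀ i, 0 ≤ w i) ∧ ∑ i, w i ≤ c ∧ ∑ i, w i • v i = x := by
  have range_option : insert 0 (Set.range v) = Set.range fun o : Option ι => o.elim 0 v := by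
    ext y
    simp [Option.exists, eq_comm]
  rw [range_option, convexHull_range_eq_image_stdSimplex]
  constructor
  · rintro ⟨_, ⟨w, ⟨hw, hw1⟩, rfl⟩, rfl⟩
    rw [Fintype.sum_option] at hw1
    refine ⟨fun i => c * w (some i), fun i => mul_nonneg hc (hw _), ?_, ?_⟩
    · rw [← mul_sum]
      exact mul_le_of_le_one_right hc (by linarith [hw none])
    · simp [Fintype.linearCombination_apply, Fintype.sum_option, smul_sum, mul_smul]
  · rintro ⟨w, hw, hwc, rfl⟩
    -- When `c = 0` all the `w i` vanish, so that the junk value `w i / 0 = 0` does no harm.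
    have mul_div (i : ι) : c * (w i / c) = w i := mul_div_cancel_of_imp' fun hc0 =>
      (sum_eq_zero_iff_of_nonneg fun i _ => hw i).1
        ((hwc.trans_eq hc0).antisymm (sum_nonneg fun i _ => hw i)) i (mem_univ i)
    refine ⟨∑ i, (w i / c) • v i, ⟨fun o => o.elim (1 - ∑ i, w i / c) (w · / c), ⟨?_, ?_⟩, ?_⟩, ?_⟩
    · rintro (_ | i)
      · simpa [← sum_div] using div_le_one_of_le₀ hwc hc
      · exact div_nonneg (hw i) hc
    · simp [Fintype.sum_option]
    · simp [Fintype.linearCombination_apply, Fintype.sum_option]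
    · simp [smul_sum, smul_smul, mul_div]

theorem exists_nonneg_sum_add_eq [Nonempty ι] {l : ι → 𝕜} {s : 𝕜} (h : ∑ i, l i ≤ s) :
    ∃ t, 0 ≤ t ∧ ∑ i, (l i + t) = s := by
  refine ⟨(s - ∑ i, l i) / Fintype.card ι, div_nonneg (sub_nonneg.2 h) (Nat.cast_nonneg _), ?_⟩
  rw [sum_add_distrib, sum_const, card_univ, nsmul_eq_mul,
    mul_div_cancel₀ _ (Nat.cast_ne_zero.2 Fintype.card_ne_zero), add_sub_cancel]

end ConvexHull

section LiftedPoint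

variable {G H : Type*} [AddCommGroup G] [AddCommGroup H] {n : ℕ}

/-- The point of `Gⁿ⁺²` with last two coordinates `a`, `b` whose first `n` coordinates are the class
of `l` in `Gⁿ⁺¹` modulo constant tuples. This quotient is identified with `Gⁿ` by subtracting the
last entry, so that `e_1, …, e_n, -(e_1 + ⋯ + e_n)` are the images of the standard basis. -/
def liftedPoint (l : Fin (n + 1) → G) (a b : G) : Fin (n + 2) → G :=
  Fin.snoc (α := fun _ => G)
    (Fin.snoc (α := fun _ => G) (fun i : Fin n => l i.castSucc - l (Fin.last n)) a) b

theorem eq_liftedPoint_iff {x : Fin (n + 2) → G} {l : Fin (n + 1) → G} {a b : G} :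
    x = liftedPoint l a b ↔
      (∀ i : Fin n, x i.castSucc.castSucc = l i.castSucc - l (Fin.last n)) ∧
        x (Fin.last n).castSucc = a ∧ x (Fin.last (n + 1)) = b := by
  simp [funext_iff, Fin.forall_fin_succ', liftedPoint, and_assoc]

theorem map_liftedPoint (f : G →+ H) (l : Fin (n + 1) → G) (a b : G) :
    (fun i => f (liftedPoint l a b i)) = liftedPoint (fun i => f (l i)) (f a) (f b) :=
  eq_liftedPoint_iff.2 (by simp [liftedPoint])

theorem liftedPoint_eq_iff {l m : Fin (n + 1) → G} {a b c d : G} :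
    liftedPoint l a b = liftedPoint m c d ↔ (∃ t, ∀ i, l i = m i + t) ∧ a = c ∧ b = d := by
  simp only [liftedPoint, Fin.snoc_inj, and_assoc]
  refine and_congr_left' ⟨fun h => ?_, ?_⟩
  · refine ⟨l (Fin.last n) - m (Fin.last n), Fin.lastCases (by abel) fun i => ?_⟩
    rw [← sub_eq_iff_eq_add, sub_sub_eq_add_sub, add_sub_right_comm, congrFun h i, sub_add_cancel]
  · rintro ⟨t, ht⟩
    funext i
    rw [ht, ht, add_sub_add_right_eq_sub]

theorem exists_liftedPoint_eq (x : Fin (n + 2) → G) : ∃ l a b, liftedPoint l a b = x :=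
  ⟨Fin.snoc (α := fun _ => G) (fun i => x i.castSucc.castSucc) 0, _, _,
    (eq_liftedPoint_iff.2 ⟨by simp, rfl, rfl⟩).symm⟩

theorem exists_liftedPoint_natCast_eq (x : Fin (n + 2) → ℤ) :
    ∃ (l : Fin (n + 1) → ℕ) (a b : ℤ), (∃ i, l i = 0) ∧
      liftedPoint (fun i => (l i : ℤ)) a b = x := by
  obtain ⟨y, a, b, rfl⟩ := exists_liftedPoint_eq x
  obtain ⟨c, hc⟩ := Finite.exists_min y
  refine ⟨fun i => (y i - y c).toNat, a, b, ⟨c, by simp⟩,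
    liftedPoint_eq_iff.2 ⟨⟨-y c, fun i => ?_⟩, rfl, rfl⟩⟩
  rw [Int.toNat_of_nonneg (sub_nonneg.2 (hc i)), sub_eq_add_neg]

theorem liftedPoint_natCast_inj {l m : Fin (n + 1) → ℕ} {a b c d : ℤ}
    (hl : ∃ i, l i = 0) (hm : ∃ i, m i = 0)
    (h : liftedPoint (fun i => (l i : ℤ)) a b = liftedPoint (fun i => (m i : ℤ)) c d) :
    l = m ∧ a = c ∧ b = d := by
  obtain ⟨⟨t, ht⟩, hac, hbd⟩ := liftedPoint_eq_iff.1 h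
  obtain ⟨i, hi⟩ := hl
  obtain ⟨j, hj⟩ := hm
  have t_nonpos : t ≤ 0 := by have := ht i; lia
  have t_nonneg : 0 ≤ t := by have := ht j; lia
  have t_eq_zero : t = 0 := le_antisymm t_nonpos t_nonneg
  exact ⟨funext fun p => by simpa [t_eq_zero] using ht p, hac, hbd⟩

end LiftedPoint

section DeltaPolytope

variable {n : ℕ}

/-- The polytope `Δ`, the convex hull of the origin and the points `V_1, …, V_{n+3}`. -/
def deltaPolytope (n : ℕ) : Set (Fin (n + 2) → ℝ) :=
  convexHull ℝ (insert 0 (Set.range (Vpt n)))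

theorem Vpt_castSucc_castSucc (i : Fin (n + 1)) :
    Vpt n i.castSucc.castSucc = liftedPoint (Pi.single i 1) 1 1 := by
  have val_ne (j : Fin n) : (j : ℕ) ≠ n ∧ (j : ℕ) ≠ n + 1 := by lia
  rw [eq_liftedPoint_iff]
  cases i using Fin.lastCases <;>
    simp [Vpt, Pi.single_apply, Fin.ext_iff, val_ne, (val_ne _).1.symm, (val_ne _).2.symm]

theorem Vpt_castSucc_last : Vpt n (Fin.last (n + 1)).castSucc = liftedPoint 0 1 0 :=
  eq_liftedPoint_iff.2 ⟨fun j => by simp [Vpt, j.isLt.ne], by simp [Vpt], by simp [Vpt]⟩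

theorem Vpt_last : Vpt n (Fin.last (n + 2)) = liftedPoint 0 0 1 :=
  eq_liftedPoint_iff.2 ⟨fun j => by simp [Vpt, (Nat.lt_succ_of_lt j.isLt).ne],
    by simp [Vpt], by simp [Vpt]⟩

theorem sum_smul_Vpt (w : Fin (n + 3) → ℝ) :
    ∑ i, w i • Vpt n i
      = liftedPoint (fun i => w i.castSucc.castSucc)
          (∑ i : Fin (n + 1), w i.castSucc.castSucc + w (Fin.last (n + 1)).castSucc)
          (∑ i : Fin (n + 1), w i.castSucc.castSucc + w (Fin.last (n + 2))) := by
  rw [Fin.sum_univ_castSucc, Fin.sum_univ_castSucc]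
  simp only [Vpt_castSucc_castSucc, Vpt_castSucc_last, Vpt_last]
  rw [eq_liftedPoint_iff]
  simp [liftedPoint, Pi.single_apply, mul_sub]

theorem mem_smul_deltaPolytope_iff {c : ℝ} (hc : 0 ≤ c) {x : Fin (n + 2) → ℝ} :
    x ∈ c • deltaPolytope n ↔ ∃ l a b, (∀ i, 0 ≤ l i) ∧ ∑ i, l i ≤ min a b ∧ max a b ≤ c ∧
      liftedPoint l a b = x := by
  rw [deltaPolytope, mem_smul_convexHull_insert_zero_range hc]
  constructor
  · rintro ⟨w, hw, hwc, rfl⟩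
    rw [Fin.sum_univ_castSucc, Fin.sum_univ_castSucc] at hwc
    have hu := hw (Fin.last (n + 1)).castSucc
    have hv := hw (Fin.last (n + 2))
    exact ⟨_, _, _, fun i => hw _, le_min (by linarith) (by linarith),
      max_le (by linarith) (by linarith), (sum_smul_Vpt w).symm⟩
  · rintro ⟨l, a, b, hl, hlab, habc, rfl⟩
    obtain ⟨t, ht, sum_add⟩ := exists_nonneg_sum_add_eq hlab
    refine ⟨Fin.snoc (α := fun _ => ℝ) (Fin.snoc (α := fun _ => ℝ) (fun i => l i + t)
      (a - min a b)) (b - min a b), ?_, ?_, ?_⟩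
    · refine Fin.lastCases ?_ (Fin.lastCases ?_ fun i => ?_)
      · simp
      · simp
      · simpa using add_nonneg (hl i) ht
    · simp only [Fin.sum_snoc, sum_add]
      linarith [min_add_max a b]
    · rw [sum_smul_Vpt, liftedPoint_eq_iff]
      simp [sum_add]

theorem liftedPoint_natCast_mem_smul_deltaPolytope_iff {l : Fin (n + 1) → ℕ} (hl : ∃ i, l i = 0)
    {a b c : ℝ} (hc : 0 ≤ c) :
    liftedPoint (fun i => (l i : ℝ)) a b ∈ c • deltaPolytope n ↔
      ∑ i, (l i : ℝ) ≤ min a b ∧ max a b ≤ c := by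
  rw [mem_smul_deltaPolytope_iff hc]
  constructor
  · rintro ⟨m, a', b', hm, hmab, habc, h⟩
    obtain ⟨⟨t, ht⟩, rfl, rfl⟩ := liftedPoint_eq_iff.1 h
    obtain ⟨j, hlj⟩ := hl
    -- A reduced `l` is the entrywise least nonnegative representative of its class.
    have t_nonneg : 0 ≤ t := by simpa [ht, hlj] using hm j
    refine ⟨le_trans (sum_le_sum fun i _ => ?_) hmab, habc⟩
    rw [ht]
    exact le_add_of_nonneg_right t_nonneg
  · rintro ⟨hlab, habc⟩
    exact ⟨_, _, _, fun i => Nat.cast_nonneg _, hlab, habc, rfl⟩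

theorem intCast_mem_smul_deltaPolytope_iff {k : ℕ} {x : Fin (n + 2) → ℤ} :
    (fun i => (x i : ℝ)) ∈ (k : ℝ) • deltaPolytope n ↔
      ∃ a ∈ range (k + 1), ∃ b ∈ range (k + 1),
        ∃ l ∈ reducedTuplesSumLE (Fin (n + 1)) (min a b),
          liftedPoint (fun i => (l i : ℤ)) a b = x := by
  have cast_lifted (l : Fin (n + 1) → ℕ) (a b : ℤ) :
      (fun i => ((liftedPoint (fun i => (l i : ℤ)) a b i : ℤ) : ℝ))
        = liftedPoint (fun i => (l i : ℝ)) a b := by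
    simpa using map_liftedPoint (Int.castAddHom ℝ) (fun i => (l i : ℤ)) a b
  simp only [mem_reducedTuplesSumLE, mem_range_succ_iff]
  constructor
  · intro hx
    obtain ⟨l, a, b, hl, rfl⟩ := exists_liftedPoint_natCast_eq x
    rw [cast_lifted, liftedPoint_natCast_mem_smul_deltaPolytope_iff hl k.cast_nonneg] at hx
    obtain ⟨hlab, habk⟩ : ∑ i, (l i : ℤ) ≤ min a b ∧ max a b ≤ k := by exact_mod_cast hx
    have sum_nonneg : 0 ≤ ∑ i, (l i : ℤ) := by positivity
    lift a to ℕ using sum_nonneg.trans (hlab.trans (min_le_left _ _))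
    lift b to ℕ using sum_nonneg.trans (hlab.trans (min_le_right _ _))
    norm_cast at hlab habk
    exact ⟨a, (le_max_left _ _).trans habk, b, (le_max_right _ _).trans habk, l, ⟨hlab, hl⟩, rfl⟩
  · rintro ⟨a, ha, b, hb, l, ⟨hlab, hl⟩, rfl⟩
    rw [cast_lifted, liftedPoint_natCast_mem_smul_deltaPolytope_iff hl k.cast_nonneg]
    exact_mod_cast And.intro hlab (max_le ha hb)

theorem ncard_intCast_mem_smul_deltaPolytope (n k : ℕ) :
    Set.ncard {x : Fin (n + 2) → ℤ | (fun i => (x i : ℝ)) ∈ (k : ℝ) • deltaPolytope n}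
      = ∑ a ∈ range (k + 1), ∑ b ∈ range (k + 1),
          #(reducedTuplesSumLE (Fin (n + 1)) (min a b)) := by
  set S := (range (k + 1) ×ˢ range (k + 1)).sigma fun p =>
    reducedTuplesSumLE (Fin (n + 1)) (min p.1 p.2) with hS
  have image_eq : {x : Fin (n + 2) → ℤ | (fun i => (x i : ℝ)) ∈ (k : ℝ) • deltaPolytope n}
      = (fun p : Σ _ : ℕ × ℕ, Fin (n + 1) → ℕ =>
          liftedPoint (fun i => (p.2 i : ℤ)) p.1.1 p.1.2) '' S := by
    ext x
    simp only [Set.mem_ofPred, intCast_mem_smul_deltaPolytope_iff, Set.mem_image, mem_coe, hS,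
      mem_sigma, mem_product]
    constructor
    · rintro ⟨a, ha, b, hb, l, hl, rfl⟩
      exact ⟨⟨(a, b), l⟩, ⟨⟨ha, hb⟩, hl⟩, rfl⟩
    · rintro ⟨⟨⟨a, b⟩, l⟩, ⟨⟨ha, hb⟩, hl⟩, rfl⟩
      exact ⟨a, ha, b, hb, l, hl, rfl⟩
  rw [image_eq, Set.InjOn.ncard_image, Set.ncard_coe_finset, card_sigma, sum_product]
  rintro ⟨⟨a, b⟩, l⟩ hp ⟨⟨c, d⟩, m⟩ hq h
  have hl := (mem_reducedTuplesSumLE.1 (mem_sigma.1 hp).2).2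
  have hm := (mem_reducedTuplesSumLE.1 (mem_sigma.1 hq).2).2
  obtain ⟨rfl, hac, hbd⟩ := liftedPoint_natCast_inj hl hm h
  simpa using And.intro hac hbd

end DeltaPolytope

theorem stmt17 (n : ℕ) (hn : 1 ≤ n) (k : ℕ) :
    Set.ncard {x : Fin (n + 2) → ℤ |
        (fun i => (x i : ℝ)) ∈
          (k : ℝ) • convexHull ℝ (insert (0 : Fin (n + 2) → ℝ) (Set.range (Vpt n)))}
      = (k + n + 2).choose (n + 2)
        + 2 * (∑ j ∈ Finset.Icc 1 n, if j ≤ k then (k - j + n + 2).choose (n + 2) else 0)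
        + (k + 1).choose (n + 2) :=
  (ncard_intCast_mem_smul_deltaPolytope n k).trans (sum_sum_card_reducedTuplesSumLE_min n k)
end
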